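/- arXiv:2603.10288 — 3 statements merged into one kernel-verified Lean document; each statement's English description precedes it below -/
import Mathlib

section
/- Corollary (a.e. Doob–Dynkin factorization for separable targets). Let (𝒳,Σ,ℙ) be a probability space with (𝒳,Σ) an analytic Borel space, and let (𝒴,Σ_𝒴) and (𝒵,Σ_𝒵) be separable measurable spaces. Suppose f : 𝒳 → 𝒴 and g : 𝒳 → 𝒵 are measurable. If for all x, y ∈ 𝒳, f(x) = f(y) implies g(x) = g(y), then there exists a measurable function h : 𝒴 → 𝒵 such that g = h ∘ f ℙ-a.e. -/
open MeasureTheory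

noncomputable section

universe u v w u'

/-- `f` is a (pointwise nonnegative, measurable) density of `P` w.r.t. `μ`,
i.e. a version of the Radon–Nikodym derivative `dP/dμ`. -/
def IsDensity {X : Type*} [MeasurableSpace X] (P μ : Measure X) (f : X → ℝ) : Prop :=
  Measurable f ∧ (∀ x, 0 ≤ f x) ∧ P = μ.withDensity (fun x => ENNReal.ofReal (f x))

/-- The proportionality set `D(x, Θ')` determined by a family of densities. -/
def DSet {X : Type*} {Θ : Type*} (f : Θ → X → ℝ) (x : X) (Θ' : Set Θ) : Set X :=
  {y | ∃ h : ℝ, 0 < h ∧ ∀ θ ∈ Θ', f θ y = f θ x * h}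

/-- A statistic `T` is sufficient for the model `{P θ}`. -/
def IsSufficientStat {X : Type u} [mX : MeasurableSpace X] {Θ : Type v}
    (P : Θ → Measure X) {T' : Type w} [mT : MeasurableSpace T'] (T : X → T') : Prop :=
  Measurable T ∧
  ∀ E : Set X, MeasurableSet E → ∃ κ : T' → ℝ, Measurable κ ∧
    ∀ θ : Θ, (P θ)[E.indicator (fun _ => (1 : ℝ)) | MeasurableSpace.comap T mT] =ᵐ[P θ] κ ∘ T

/-- A statistic `T` is minimal sufficient: it is sufficient and it factors
`P θ`-a.e. (for every `θ`) through every sufficient statistic via a measurable map. -/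
def IsMinimalSufficientStat {X : Type u} [mX : MeasurableSpace X] {Θ : Type v}
    (P : Θ → Measure X) {T' : Type w} [mT : MeasurableSpace T'] (T : X → T') : Prop :=
  IsSufficientStat P T ∧
  ∀ (S' : Type u') (mS : MeasurableSpace S') (S : X → S'),
    @IsSufficientStat X mX Θ P S' mS S →
      ∃ g : S' → T', @Measurable S' T' mS mT g ∧ ∀ θ : Θ, T =ᵐ[P θ] g ∘ S

/-- A measurable space is analytic Borel iff it is separable (countably generated with
measurable singletons) and it is the image of a standard Borel space under a surjective
measurable map. -/
def IsAnalyticBorel (X : Type u) [mX : MeasurableSpace X] : Prop :=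
  MeasurableSpace.CountablyGenerated X ∧ MeasurableSingletonClass X ∧
  ∃ (Y : Type u) (mY : MeasurableSpace Y), @StandardBorelSpace Y mY ∧
    ∃ g : Y → X, @Measurable Y X mY mX g ∧ Function.Surjective g

/-- A sub-σ-algebra `m ⊆ Σ` is sufficient for the model `{P θ}`. -/
def IsSufficientSubalgebra {X : Type u} [mX : MeasurableSpace X] {Θ : Type v}
    (P : Θ → Measure X) (m : MeasurableSpace X) : Prop :=
  m ≤ mX ∧ ∀ E : Set X, MeasurableSet[mX] E → ∃ κ : X → ℝ, Measurable[m] κ ∧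
    ∀ θ : Θ, (P θ)[E.indicator (fun _ => (1 : ℝ)) | m] =ᵐ[P θ] κ

/-- The collection `𝔑_ℰ` of measurable sets null under every `P θ`. -/
def modelNullSets {X : Type u} [mX : MeasurableSpace X] {Θ : Type v}
    (P : Θ → Measure X) : Set (Set X) :=
  {N | MeasurableSet N ∧ ∀ θ, P θ N = 0}

/-- The σ-algebra `𝔄̄^ℰ` generated by `𝔄 ∪ 𝔑_ℰ`. -/
def completionAlg {X : Type u} [mX : MeasurableSpace X] {Θ : Type v}
    (P : Θ → Measure X) (m : MeasurableSpace X) : MeasurableSpace X :=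
  MeasurableSpace.generateFrom ({s | MeasurableSet[m] s} ∪ @modelNullSets X mX Θ P)

/-- A sub-σ-algebra is minimal sufficient iff it is sufficient and contained in the
`𝔑_ℰ`-completion of every sufficient sub-σ-algebra. -/
def IsMinimalSufficientSubalgebra {X : Type u} [mX : MeasurableSpace X] {Θ : Type v}
    (P : Θ → Measure X) (m : MeasurableSpace X) : Prop :=
  @IsSufficientSubalgebra X mX Θ P m ∧
  ∀ m' : MeasurableSpace X, @IsSufficientSubalgebra X mX Θ P m' →
    m ≤ @completionAlg X mX Θ P m'

/-- The total variation distance `d_ℰ(θ₁, θ₂) = sup_{E ∈ Σ} |P θ₁ E - P θ₂ E|`. -/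
def tvDist {X : Type u} [MeasurableSpace X] {Θ : Type v} (P : Θ → Measure X)
    (θ₁ θ₂ : Θ) : ℝ :=
  ⨆ E : {E : Set X // MeasurableSet E}, |(P θ₁ E.1).toReal - (P θ₂ E.1).toReal|

/-- The coarsest topology `τ⟨ℰ⟩` on `Θ` making `θ ↦ P θ E` continuous for every `E ∈ Σ`. -/
def modelTopology {X : Type u} [MeasurableSpace X] {Θ : Type v} (P : Θ → Measure X) :
    TopologicalSpace Θ :=
  ⨅ E : {E : Set X // MeasurableSet E},
    TopologicalSpace.induced (fun θ => (P θ E.1).toReal) inferInstance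

/-!
As `g` is constant on the fibres of `f`, it factors pointwise as `g = h ∘ f`, and Lusin separation
makes `h` measurable on the range of `f`. It remains to see that this range is measurable up to a
null set of the law of `f`. It is the preimage of an analytic subset of Cantor space under a
measurable injection, and an analytic set `F(ℕ^ℕ)` is inner regular for compact sets: bounding the
coordinates in `ℕ^ℕ` one after the other, each time at an arbitrarily small loss of measure,
confines the argument of `F` to a compact box whose image still has almost full measure.
-/

section

open Set Function

theorem exists_pi_Iio_subset_of_isOpen {E : ℕ → Type*} [∀ i, TopologicalSpace (E i)]
    [∀ i, DiscreteTopology (E i)] {K : ∀ i, Set (E i)} (hK : ∀ i, IsCompact (K i))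
    {U : Set (∀ i, E i)} (hU : IsOpen U) (hKU : univ.pi K ⊆ U) :
    ∃ k, (Iio k).pi K ⊆ U := by
  classical
  let : MetricSpace (∀ i, E i) := PiNat.metricSpace
  obtain hempty | ⟨z, hz⟩ := (univ.pi K).eq_empty_or_nonempty
  · obtain ⟨i, hi⟩ := univ_pi_eq_empty_iff.1 hempty
    exact ⟨i + 1, fun s hs ↦ by simpa [hi] using hs i (Nat.lt_succ_self i)⟩
  obtain ⟨δ, hδ, hδU⟩ := (isCompact_univ_pi hK).exists_thickening_subset_open hU hKU
  obtain ⟨k, hk⟩ := exists_pow_lt_of_lt_one hδ (one_half_lt_one : (1 / 2 : ℝ) < 1)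
  refine ⟨k, fun s hs ↦ hδU ?_⟩
  -- Replacing the coordinates of `s` from `k` on by those of `z` moves `s` by at most `(1/2)^k`.
  have hmem : (Iio k).piecewise s z ∈ univ.pi K := fun i _ ↦ by
    by_cases hi : i ∈ Iio k
    · simpa [hi] using hs i hi
    · simpa [hi] using hz i (mem_univ i)
  have hcyl : s ∈ PiNat.cylinder ((Iio k).piecewise s z) k := fun i hi ↦
    (piecewise_eq_of_mem (Iio k) s z hi).symm
  exact Metric.mem_thickening_iff.2
    ⟨_, hmem, (PiNat.mem_cylinder_iff_dist_le.1 hcyl).trans_lt hk⟩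

section

variable {W : Type*} [MeasurableSpace W] {ν : Measure W} {r : ENNReal}

section

variable {ι : Type*} [Preorder ι] [IsDirectedOrder ι]
  [(Filter.atTop : Filter ι).IsCountablyGenerated]

theorem exists_lt_measure_image_inter_preimage_Iic {α : Type*} {F : α → W} (φ : α → ι) {S : Set α}
    (hr : r < ν (F '' S)) : ∃ m, r < ν (F '' (S ∩ φ ⁻¹' Iic m)) := by
  have hmono : Monotone fun m ↦ F '' (S ∩ φ ⁻¹' Iic m) := fun a b hab ↦
    image_mono (inter_subset_inter_right S (preimage_mono (Iic_subset_Iic.2 hab)))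
  have hS : F '' S = ⋃ m, F '' (S ∩ φ ⁻¹' Iic m) := by
    rw [← image_iUnion, ← inter_iUnion, ← preimage_iUnion, iUnion_Iic, preimage_univ, inter_univ]
  rwa [hS, hmono.measure_iUnion, lt_iSup_iff] at hr

theorem exists_forall_lt_measure_image_pi_Iio {F : (ℕ → ι) → W} (hr : r < ν (range F)) :
    ∃ n : ℕ → ι, ∀ k, r < ν (F '' (Iio k).pi fun i ↦ Iic (n i)) := by
  have hstep (k : ℕ) (S : Set (ℕ → ι)) (hS : r < ν (F '' S)) :=
    exists_lt_measure_image_inter_preimage_Iic (fun s ↦ s k) hS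
  obtain ⟨-, s, -⟩ := nonempty_of_measure_ne_zero (ne_zero_of_lt hr)
  have : Nonempty ι := ⟨s 0⟩
  choose! m hm using hstep
  let T : ℕ → Set (ℕ → ι) := fun k ↦ k.rec univ fun k S ↦ S ∩ {s | s k ≤ m k S}
  have hTsucc (k : ℕ) : T (k + 1) = T k ∩ {s | s k ≤ m k (T k)} := rfl
  have hTpi (k : ℕ) : T k = (Iio k).pi fun i ↦ Iic (m i (T i)) := by
    induction k with
    | zero => simp [T]
    | succ k ih =>
      rw [hTsucc, ← Order.succ_eq_add_one, Order.Iio_succ_eq_insert, insert_pi, ← ih, inter_comm]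
      rfl
  refine ⟨fun k ↦ m k (T k), fun k ↦ hTpi k ▸ ?_⟩
  induction k with
  | zero => simpa [T] using hr
  | succ k ih => exact hm k (T k) ih

end

variable [TopologicalSpace W] [ν.OuterRegular]

theorem exists_isCompact_subset_range_le_measure {F : (ℕ → ℕ) → W} (hF : Continuous F)
    (hr : r < ν (range F)) : ∃ K ⊆ range F, IsCompact K ∧ r ≤ ν K := by
  obtain ⟨n, hn⟩ := exists_forall_lt_measure_image_pi_Iio hr
  have hfac (i : ℕ) : IsCompact (Iic (n i)) := (finite_Iic (n i)).isCompact
  let C : Set (ℕ → ℕ) := univ.pi fun i ↦ Iic (n i)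
  refine ⟨F '' C, image_subset_range F C, (isCompact_univ_pi hfac).image hF, ?_⟩
  -- The images of the boxes bounded in `k` coordinates need not be measurable, so outer regularity
  -- replaces continuity from above as `k` grows.
  rw [measure_eq_iInf_isOpen]
  refine le_iInf₂ fun U hCU ↦ le_iInf fun hU ↦ ?_
  obtain ⟨k, hk⟩ := exists_pi_Iio_subset_of_isOpen hfac (hU.preimage hF) (image_subset_iff.1 hCU)
  exact (hn k).le.trans (measure_mono (image_subset_iff.2 hk))

theorem nullMeasurableSet_of_analyticSet [T2Space W] [OpensMeasurableSpace W] [IsFiniteMeasure ν]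
    {s : Set W} (hs : AnalyticSet s) : NullMeasurableSet s ν := by
  rw [AnalyticSet] at hs
  obtain rfl | ⟨F, hF, rfl⟩ := hs
  · exact MeasurableSet.empty.nullMeasurableSet
  obtain hzero | hpos := eq_zero_or_pos (ν (range F))
  · exact NullMeasurableSet.of_null hzero
  obtain ⟨u, -, hu, hlim⟩ := exists_seq_strictMono_tendsto' hpos
  choose K hKF hK huK using fun n ↦ exists_isCompact_subset_range_le_measure hF (hu n).2
  have hmeas : MeasurableSet (⋃ n, K n) := .iUnion fun n ↦ (hK n).measurableSet
  have hle : ν (range F) ≤ ν (⋃ n, K n) :=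
    le_of_tendsto' hlim fun n ↦ (huK n).trans (measure_mono (subset_iUnion K n))
  exact hmeas.nullMeasurableSet.congr <|
    ae_eq_of_subset_of_measure_ge (iUnion_subset hKF) hle hmeas.nullMeasurableSet
      (measure_ne_top ν _)

end

section

variable {S Y Z : Type*} [MeasurableSpace S] [StandardBorelSpace S] [MeasurableSpace Y]
  [MeasurableSpace.CountablySeparated Y] [MeasurableSpace Z] {p : S → Y}

theorem nullMeasurableSet_range (hp : Measurable p) (ν : Measure Y) [SFinite ν] :
    NullMeasurableSet (range p) ν := by
  obtain ⟨e, he, heinj⟩ := MeasurableSpace.measurable_injection_nat_bool_of_countablySeparated Y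
  have hanalytic : AnalyticSet (range (e ∘ p)) := by
    simpa only [image_univ] using MeasurableSet.univ.analyticSet_image (he.comp hp)
  have hrange : e ⁻¹' range (e ∘ p) = range p := by
    rw [range_comp, heinj.preimage_image]
  have hfinite : NullMeasurableSet (range p) ν.toFinite :=
    hrange ▸ (nullMeasurableSet_of_analyticSet hanalytic).preimage
      (he.quasiMeasurePreserving ν.toFinite)
  exact hfinite.mono_ac (absolutelyContinuous_toFinite ν)

theorem aemeasurable_of_measurable_comp (hp : Measurable p) {h : Y → Z} (hh : Measurable (h ∘ p))
    {ν : Measure Y} [SFinite ν] (hν : ∀ᵐ y ∂ν, y ∈ range p) : AEMeasurable h ν := by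
  obtain ⟨B, hBp, hB, hBae⟩ := (nullMeasurableSet_range hp ν).exists_measurable_subset_ae_eq
  have : MeasurableSpace.CountablySeparated (range p) :=
    MeasurableSpace.Subtype.countablySeparated
  have hrestrict : Measurable (B.domRestrict h) :=
    (hp.measurable_comp_iff_restrict.1 hh).comp (measurable_inclusion hBp)
  have hνB : ν.restrict B = ν := Measure.restrict_eq_self_of_ae_mem <| by
    filter_upwards [hBae.mem_iff, hν] with y hy hyp using hy.2 hyp
  exact hνB ▸ aemeasurable_restrict_of_measurable_subtype hB hrestrict

end

theorem ae_map_mem_range_of_nullMeasurableSet {X Y : Type*} [MeasurableSpace X] [MeasurableSpace Y]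
    {μ : Measure X} {f : X → Y} (hf : AEMeasurable f μ)
    (hrange : NullMeasurableSet (range f) (μ.map f)) : ∀ᵐ y ∂μ.map f, y ∈ range f := by
  change μ.map f (range f)ᶜ = 0
  rw [Measure.map_apply₀ hf hrange.compl, preimage_compl, preimage_range, compl_univ,
    measure_empty]

theorem cor_ae_factorization_general {S X Y Z : Type*} [MeasurableSpace S] [StandardBorelSpace S]
    [MeasurableSpace X] {φ : S → X} (hφ : Measurable φ) (hφsurj : Surjective φ)
    (μ : Measure X) [SFinite μ] [MeasurableSpace Y] [MeasurableSpace.CountablySeparated Y]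
    [MeasurableSpace Z] [Nonempty Z] {f : X → Y} (hf : Measurable f) {g : X → Z}
    (hg : Measurable g) (hfg : g.FactorsThrough f) :
    ∃ h : Y → Z, Measurable h ∧ g =ᵐ[μ] h ∘ f := by
  obtain ⟨h, rfl⟩ := (factorsThrough_iff g).1 hfg
  have hrange : range (f ∘ φ) = range f := hφsurj.range_comp f
  have hmem : ∀ᵐ y ∂μ.map f, y ∈ range (f ∘ φ) := hrange ▸
    ae_map_mem_range_of_nullMeasurableSet hf.aemeasurable
      (hrange ▸ nullMeasurableSet_range (hf.comp hφ) (μ.map f))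
  have hh : AEMeasurable h (μ.map f) :=
    aemeasurable_of_measurable_comp (hf.comp hφ) (hg.comp hφ) hmem
  exact ⟨hh.mk h, hh.measurable_mk, ae_of_ae_map hf.aemeasurable hh.ae_eq_mk⟩

end

/-- Corollary (a.e. Doob–Dynkin factorization for separable targets). -/
theorem cor_ae_factorization
    {X : Type u} [mX : MeasurableSpace X] (ℙ : Measure X)
    (hprob : IsProbabilityMeasure ℙ) (hX : IsAnalyticBorel X)
    {Y : Type v} [mY : MeasurableSpace Y]
    (hYcg : MeasurableSpace.CountablyGenerated Y) (hYsing : MeasurableSingletonClass Y)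
    {Z : Type w} [mZ : MeasurableSpace Z]
    (hZcg : MeasurableSpace.CountablyGenerated Z) (hZsing : MeasurableSingletonClass Z)
    (f : X → Y) (hf : Measurable f) (g : X → Z) (hg : Measurable g)
    (hfg : ∀ x y : X, f x = f y → g x = g y) :
    ∃ h : Y → Z, Measurable h ∧ g =ᵐ[ℙ] h ∘ f := by
  obtain ⟨-, -, S, mS, hS, φ, hφ, hφsurj⟩ := hX
  have : Nonempty Z := (nonempty_of_isProbabilityMeasure ℙ).map g
  exact cor_ae_factorization_general hφ hφsurj ℙ hf hg fun {x y} ↦ hfg x y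
end
end

section
/- Lemma 4.1. Let ℰ = (𝒳, Σ, {P_θ}_{θ∈Θ}) be a statistical model, μ a σ-finite measure on (𝒳,Σ) with P_θ ≪ μ for every θ, and T : 𝒳 → (𝒯,Σ_𝒯) measurable. Suppose (𝒳,Σ) is an analytic Borel space and (𝒯,Σ_𝒯) is separable. For each θ ∈ Θ choose a density f_θ of P_θ with respect to μ. If there exists a nonempty countable subset Θ₀ ⊆ Θ that is dense in Θ with respect to the topology τ⟨ℰ⟩ such that for all x, y ∈ 𝒳 with T(x) = T(y) one has y ∈ D(x,Θ₀), then T is sufficient. -/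
open MeasureTheory

noncomputable section

universe u v w u'

/-! Halmos–Savage: a countable family of densities `F i` is dominated by a finite mixture
`∑ cᵢ Fᵢ`, and passing from `x` to `y` in the same fibre of `T` multiplies numerator and denominator
of `F i / ∑ cⱼ Fⱼ` by the same constant, so these quotients are constant on the fibres of `T`. On an
analytic space, Blackwell's theorem upgrades this to measurability with respect to `σ(T)`, so that
conditioning on `T` gives the same answer under each `P i` as under the mixture. A statistic
sufficient on a dense set of parameters is sufficient for all of them, because integrals of bounded
functions depend continuously on the parameter and the identities
`∫_A κ ∘ T dP_θ = P_θ (A ∩ E)`, `A ∈ σ(T)`, characterize the conditional probability. -/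

open Set
open scoped ENNReal NNReal

theorem measurable_comap_of_factorsThrough {X Y Z T' : Type*} [MeasurableSpace X]
    [MeasurableSpace Y] [StandardBorelSpace Y] [MeasurableSpace Z] [mT : MeasurableSpace T']
    [MeasurableSpace.CountablySeparated T'] {g : Y → X} (hg : Measurable g)
    (hg_surj : Function.Surjective g) {T : X → T'} (hT : Measurable T) {r : X → Z}
    (hr : Measurable r) (hrT : r.FactorsThrough T) : Measurable[mT.comap T] r := by
  let φ : range T → Z := r ∘ Function.surjInv rangeFactorization_surjective
  have hφ : r = φ ∘ rangeFactorization T := funext fun x =>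
    hrT (congrArg Subtype.val
      (Function.surjInv_eq rangeFactorization_surjective (rangeFactorization T x))).symm
  have : MeasurableSpace.CountablySeparated (range T) :=
    MeasurableSpace.Subtype.countablySeparated
  have hφ_meas : Measurable φ := by
    rw [← (hT.rangeFactorization.comp hg).measurable_comp_iff_of_surjective
      (rangeFactorization_surjective.comp hg_surj), ← Function.comp_assoc, ← hφ]
    exact hr.comp hg
  rw [hφ]
  exact hφ_meas.comp (comap_measurable T).rangeFactorization

section Mixture

variable {X ι : Type*} {F : ι → X → ℝ≥0∞} {c : ι → ℝ≥0}

/-- The density of the mixture `∑ cᵢ Pᵢ` of measures `Pᵢ` with densities `F i`. The weights are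
finite but need not sum to one. -/
def mixtureDensity (c : ι → ℝ≥0) (F : ι → X → ℝ≥0∞) (x : X) : ℝ≥0∞ :=
  ∑' i, c i * F i x

theorem mixtureDensity_eq_mul {x y : X} {h : ℝ≥0∞} (hF : ∀ i, F i y = h * F i x) :
    mixtureDensity c F y = h * mixtureDensity c F x := by
  simp only [mixtureDensity, hF, ← ENNReal.tsum_mul_left, mul_left_comm]

theorem eq_zero_of_mixtureDensity_eq_zero {i : ι} (hc : c i ≠ 0) {x : X}
    (hx : mixtureDensity c F x = 0) : F i x = 0 :=
  (mul_eq_zero.1 (ENNReal.tsum_eq_zero.1 hx i)).resolve_left (ENNReal.coe_ne_zero.2 hc)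

theorem factorsThrough_div_mixtureDensity {T' : Type*} {T : X → T'}
    (hF : ∀ x y, T x = T y → ∃ h : ℝ≥0∞, h ≠ 0 ∧ h ≠ ∞ ∧ ∀ i, F i y = h * F i x) (i : ι) :
    (F i / mixtureDensity c F).FactorsThrough T := fun x y hxy => by
  obtain ⟨h, h_zero, h_top, hFh⟩ := hF x y hxy
  simp only [Pi.div_apply, hFh i, mixtureDensity_eq_mul hFh,
    ENNReal.mul_div_mul_left _ _ h_zero h_top]

variable [MeasurableSpace X] [Countable ι]

theorem measurable_mixtureDensity (hF : ∀ i, Measurable (F i)) :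
    Measurable (mixtureDensity c F) :=
  Measurable.tsum fun i => (hF i).const_mul _

theorem exists_weights_lintegral_mixtureDensity_ne_top {μ : Measure X}
    (hF : ∀ i, Measurable (F i)) (hF_int : ∀ i, ∫⁻ x, F i x ∂μ ≠ ∞) :
    ∃ c : ι → ℝ≥0, (∀ i, c i ≠ 0) ∧ ∫⁻ x, mixtureDensity c F x ∂μ ≠ ∞ := by
  obtain ⟨c, hc_pos, hc_sum⟩ := ENNReal.exists_pos_tsum_mul_lt_of_countable one_ne_zero _ hF_int
  refine ⟨c, fun i => (hc_pos i).ne', ?_⟩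
  have lintegral_eq : ∫⁻ x, mixtureDensity c F x ∂μ = ∑' i, (∫⁻ x, F i x ∂μ) * c i := by
    simp only [mixtureDensity, mul_comm _ (F _ _)]
    rw [lintegral_tsum fun i => ((hF i).mul_const _).aemeasurable]
    simp only [lintegral_mul_const _ (hF _)]
  exact lintegral_eq ▸ hc_sum.ne_top

end Mixture

section WithDensity

variable {X : Type*} {m mX : MeasurableSpace X} {μ : Measure X}

theorem lintegral_ne_top_of_isFiniteMeasure_withDensity (p : X → ℝ≥0∞)
    [IsFiniteMeasure (μ.withDensity p)] : ∫⁻ x, p x ∂μ ≠ ∞ := by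
  rw [← setLIntegral_univ, ← withDensity_apply _ .univ]
  exact measure_ne_top _ _

theorem withDensity_withDensity_div {p s : X → ℝ≥0∞} (hp : Measurable p) (hs : Measurable s)
    (hs_top : ∀ᵐ x ∂μ, s x ≠ ∞) (hsp : ∀ᵐ x ∂μ, s x = 0 → p x = 0) :
    (μ.withDensity s).withDensity (p / s) = μ.withDensity p := by
  rw [← withDensity_mul μ hs (hp.div hs)]
  refine withDensity_congr_ae ?_
  filter_upwards [hs_top, hsp] with x hx_top hx
  exact ENNReal.mul_div_cancel' hx fun h => absurd h hx_top

theorem condExp_withDensity {E : Type*} [NormedAddCommGroup E] [NormedSpace ℝ E]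
    [CompleteSpace E] (hm : m ≤ mX) [SigmaFinite (μ.trim hm)] {r : X → ℝ≥0∞}
    (hr : Measurable[m] r) (hr_top : ∀ᵐ x ∂μ, r x < ∞) {f : X → E} (hf : Integrable f μ)
    (hrf : Integrable f (μ.withDensity r)) :
    (μ.withDensity r)[f | m] =ᵐ[μ.withDensity r] μ[f | m] := by
  have hr_X : Measurable r := hr.mono hm le_rfl
  have : SigmaFinite ((μ.withDensity r).trim hm) := by
    rw [trim_withDensity hm hr]
    refine SigmaFinite.withDensity_of_ne_top ?_
    have h_meas : MeasurableSet[m] {x | ¬r x ≠ ∞} := by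
      simpa only [not_not] using measurableSet_eq_fun hr measurable_const
    rw [ae_iff, trim_measurableSet_eq hm h_meas]
    exact hr_top.mono fun _ => LT.lt.ne
  have hrf_μ : Integrable (fun x => (r x).toReal • f x) μ :=
    (integrable_withDensity_iff_integrable_smul' hr_X hr_top).1 hrf
  have pull_out : μ[fun x => (r x).toReal • f x | m] =ᵐ[μ] fun x => (r x).toReal • μ[f | m] x :=
    condExp_smul_of_aestronglyMeasurable_left
      hr.ennreal_toReal.stronglyMeasurable.aestronglyMeasurable hrf_μ hf
  have h_int : Integrable (μ[f | m]) (μ.withDensity r) :=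
    (integrable_withDensity_iff_integrable_smul' hr_X hr_top).2
      (integrable_condExp.congr pull_out)
  refine (ae_eq_condExp_of_forall_setIntegral_eq hm hrf (fun _ _ _ => h_int.integrableOn)
    (fun A hA _ => ?_) stronglyMeasurable_condExp.aestronglyMeasurable).symm
  have hr_top_A : ∀ᵐ x ∂μ.restrict A, r x < ∞ := ae_restrict_of_ae hr_top
  calc ∫ x in A, μ[f | m] x ∂μ.withDensity r
      = ∫ x in A, (r x).toReal • μ[f | m] x ∂μ :=
        setIntegral_withDensity_eq_setIntegral_toReal_smul hr_X hr_top_A _ (hm A hA)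
    _ = ∫ x in A, μ[fun x => (r x).toReal • f x | m] x ∂μ :=
        integral_congr_ae (ae_restrict_of_ae pull_out.symm)
    _ = ∫ x in A, (r x).toReal • f x ∂μ := setIntegral_condExp hm hrf_μ hA
    _ = ∫ x in A, f x ∂μ.withDensity r :=
        (setIntegral_withDensity_eq_setIntegral_toReal_smul hr_X hr_top_A _ (hm A hA)).symm

end WithDensity

section CountableModel

variable {X T' : Type*} [MeasurableSpace X] [mT : MeasurableSpace T'] {T : X → T'}

theorem isSufficientStat_withDensity {Θ : Type*} {ν : Measure X} [IsFiniteMeasure ν]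
    (hT : Measurable T) {r : Θ → X → ℝ≥0∞} (hr : ∀ θ, Measurable[mT.comap T] (r θ))
    [∀ θ, IsFiniteMeasure (ν.withDensity (r θ))] :
    IsSufficientStat (fun θ => ν.withDensity (r θ)) T := by
  refine ⟨hT, fun E hE => ?_⟩
  obtain ⟨κ, hκ, hκT⟩ := (stronglyMeasurable_condExp (μ := ν) (m := mT.comap T)
    (f := E.indicator fun _ => (1 : ℝ))).measurable.exists_eq_measurable_comp
  refine ⟨κ, hκ, fun θ => ?_⟩
  rw [← hκT]
  exact condExp_withDensity hT.comap_le (hr θ)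
    (ae_lt_top ((hr θ).mono hT.comap_le le_rfl)
      (lintegral_ne_top_of_isFiniteMeasure_withDensity (r θ)))
    ((integrable_const 1).indicator hE) ((integrable_const 1).indicator hE)

theorem isSufficientStat_of_countable {ι Y : Type*} [Countable ι] [MeasurableSpace Y]
    [StandardBorelSpace Y] [MeasurableSpace.CountablySeparated T'] {g : Y → X}
    (hg : Measurable g) (hg_surj : Function.Surjective g) {μ : Measure X} {F : ι → X → ℝ≥0∞}
    [∀ i, IsFiniteMeasure (μ.withDensity (F i))] (hF : ∀ i, Measurable (F i)) (hT : Measurable T)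
    (hFT : ∀ x y, T x = T y → ∃ h : ℝ≥0∞, h ≠ 0 ∧ h ≠ ∞ ∧ ∀ i, F i y = h * F i x) :
    IsSufficientStat (fun i => μ.withDensity (F i)) T := by
  obtain ⟨c, hc, hc_int⟩ := exists_weights_lintegral_mixtureDensity_ne_top hF fun i =>
    lintegral_ne_top_of_isFiniteMeasure_withDensity (μ := μ) (F i)
  let s := mixtureDensity c F
  have hs : Measurable s := measurable_mixtureDensity hF
  have : IsFiniteMeasure (μ.withDensity s) := isFiniteMeasure_withDensity hc_int
  have density_div (i : ι) : (μ.withDensity s).withDensity (F i / s) = μ.withDensity (F i) :=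
    withDensity_withDensity_div (hF i) hs ((ae_lt_top hs hc_int).mono fun _ => LT.lt.ne)
      (ae_of_all _ fun _ => eq_zero_of_mixtureDensity_eq_zero (hc i))
  have (i : ι) : IsFiniteMeasure ((μ.withDensity s).withDensity (F i / s)) := by
    rw [density_div]
    infer_instance
  simp_rw [← density_div]
  exact isSufficientStat_withDensity hT fun i =>
    measurable_comap_of_factorsThrough hg hg_surj hT ((hF i).div hs)
      (factorsThrough_div_mixtureDensity hFT i)

end CountableModel

section DenseSubmodel

variable {X Θ : Type*} [MeasurableSpace X]

theorem exists_simpleFunc_forall_abs_sub_le {g : X → ℝ} (hg : Measurable g) {C : ℝ}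
    (hgC : ∀ x, |g x| ≤ C) {ε : ℝ} (hε : 0 < ε) :
    ∃ s : SimpleFunc X ℝ, ∀ x, |g x - s x| ≤ ε := by
  have h_meas : Measurable fun x => ε * ⌊g x / ε⌋ := by fun_prop
  have h_finite : (range fun x => ε * ⌊g x / ε⌋).Finite := by
    refine ((finite_Icc ⌊-C / ε⌋ ⌊C / ε⌋).image fun k : ℤ => ε * (k : ℝ)).subset ?_
    rintro _ ⟨x, rfl⟩
    obtain ⟨h_lower, h_upper⟩ := abs_le.1 (hgC x)
    exact mem_image_of_mem _ ⟨by gcongr, by gcongr⟩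
  refine ⟨⟨_, fun y => h_meas (measurableSet_singleton y), h_finite⟩, fun x => ?_⟩
  have h_fract : g x - ε * ⌊g x / ε⌋ = ε * Int.fract (g x / ε) := by
    rw [Int.fract, mul_sub, mul_div_cancel₀ _ hε.ne']
  change |g x - ε * ⌊g x / ε⌋| ≤ ε
  rw [h_fract, abs_of_nonneg (by positivity)]
  exact mul_le_of_le_one_right hε.le (Int.fract_lt_one _).le

theorem continuous_integral_of_continuous_measureReal [TopologicalSpace Θ] {P : Θ → Measure X}
    [∀ θ, IsProbabilityMeasure (P θ)]
    (hP : ∀ E, MeasurableSet E → Continuous fun θ => (P θ).real E) {g : X → ℝ}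
    (hg : Measurable g) {C : ℝ} (hgC : ∀ x, |g x| ≤ C) :
    Continuous fun θ => ∫ x, g x ∂P θ := by
  refine continuous_of_uniform_approx_of_continuous fun u hu => ?_
  obtain ⟨ε, hε, hεu⟩ := Metric.mem_uniformity_dist.1 hu
  obtain ⟨s, hs⟩ := exists_simpleFunc_forall_abs_sub_le hg hgC (half_pos hε)
  refine ⟨fun θ => ∫ x, s x ∂P θ, ?_, fun θ => hεu ?_⟩
  · simp only [SimpleFunc.integral_eq_sum _ (SimpleFunc.integrable_of_isFiniteMeasure s)]
    exact continuous_finsetSum _ fun y _ => (hP _ (s.measurableSet_fiber y)).smul continuous_const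
  · have hg_int : Integrable g (P θ) := .of_bound hg.aestronglyMeasurable C (ae_of_all _ hgC)
    calc dist (∫ x, g x ∂P θ) (∫ x, s x ∂P θ)
        = ‖∫ x, g x - s x ∂P θ‖ := by
          rw [dist_eq_norm, integral_sub hg_int (SimpleFunc.integrable_of_isFiniteMeasure s)]
      _ ≤ ε / 2 := by
          simpa using norm_integral_le_of_norm_le_const (μ := P θ)
            (f := fun x => g x - s x) (ae_of_all _ hs)
      _ < ε := half_lt_self hε

theorem continuous_measureReal_modelTopology (P : Θ → Measure X) {E : Set X}
    (hE : MeasurableSet E) : @Continuous Θ ℝ (modelTopology P) _ fun θ => (P θ).real E :=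
  continuous_iff_le_induced.2 (iInf_le _ (⟨E, hE⟩ : {E : Set X // MeasurableSet E}))

theorem setIntegral_eq_of_dense {P : Θ → Measure X} [∀ θ, IsProbabilityMeasure (P θ)]
    {D : Set Θ} (hD : @Dense Θ (modelTopology P) D) {g₁ g₂ : X → ℝ} (hg₁ : Measurable g₁)
    (hg₂ : Measurable g₂) {C₁ C₂ : ℝ} (hC₁ : ∀ x, |g₁ x| ≤ C₁) (hC₂ : ∀ x, |g₂ x| ≤ C₂)
    {A : Set X} (hA : MeasurableSet A)
    (h_eq : ∀ θ ∈ D, ∫ x in A, g₁ x ∂P θ = ∫ x in A, g₂ x ∂P θ) (θ : Θ) :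
    ∫ x in A, g₁ x ∂P θ = ∫ x in A, g₂ x ∂P θ := by
  let _ : TopologicalSpace Θ := modelTopology P
  have h_cont {g : X → ℝ} (hg : Measurable g) {C : ℝ} (hC : ∀ x, |g x| ≤ C) :
      Continuous fun θ => ∫ x in A, g x ∂P θ := by
    simp_rw [← integral_indicator hA]
    exact continuous_integral_of_continuous_measureReal
      (fun _ hE => continuous_measureReal_modelTopology P hE) (hg.indicator hA)
      fun x => (norm_indicator_le_norm_self g x).trans (hC x)
  exact congrFun ((h_cont hg₁ hC₁).ext_on hD (h_cont hg₂ hC₂) h_eq) θ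

variable {T' : Type*} [mT : MeasurableSpace T'] {T : X → T'} {P : Θ → Measure X}

theorem IsSufficientStat.exists_mem_Icc [∀ θ, IsFiniteMeasure (P θ)] (h : IsSufficientStat P T)
    {E : Set X} (hE : MeasurableSet E) :
    ∃ κ : T' → ℝ, Measurable κ ∧ (∀ t, κ t ∈ Icc (0 : ℝ) 1) ∧
      ∀ θ, (P θ)[E.indicator (fun _ => (1 : ℝ)) | mT.comap T] =ᵐ[P θ] κ ∘ T := by
  obtain ⟨κ, hκ, hκP⟩ := h.2 E hE
  refine ⟨fun t => projIcc 0 1 zero_le_one (κ t), by fun_prop, fun t => Subtype.prop _,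
    fun θ => ?_⟩
  have condExp_mem : ∀ᵐ x ∂P θ,
      (P θ)[E.indicator (fun _ => (1 : ℝ)) | mT.comap T] x ∈ Icc (0 : ℝ) 1 :=
    (convex_Icc 0 1).condExp_mem h.1.comap_le ((integrable_const 1).indicator hE) isClosed_Icc
      (ae_of_all _ fun x => by by_cases hx : x ∈ E <;> simp [hx])
  filter_upwards [hκP θ, condExp_mem] with x hκx hx
  rw [hκx] at hx ⊢
  exact congrArg Subtype.val (projIcc_of_mem zero_le_one hx).symm

theorem IsSufficientStat.of_dense [∀ θ, IsProbabilityMeasure (P θ)] {D : Set Θ}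
    (h : IsSufficientStat (fun θ : D => P θ) T) (hD : @Dense Θ (modelTopology P) D) :
    IsSufficientStat P T := by
  refine ⟨h.1, fun E hE => ?_⟩
  obtain ⟨κ, hκ, hκ_mem, hκD⟩ := h.exists_mem_Icc hE
  refine ⟨κ, hκ, fun θ => ?_⟩
  have hm : mT.comap T ≤ _ := h.1.comap_le
  have hκT : Measurable[mT.comap T] (κ ∘ T) := hκ.comp (comap_measurable T)
  have hκT_le (x : X) : |(κ ∘ T) x| ≤ 1 :=
    (abs_of_nonneg (hκ_mem (T x)).1).trans_le (hκ_mem (T x)).2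
  have hE_le (x : X) : |E.indicator (fun _ => (1 : ℝ)) x| ≤ 1 := by
    by_cases hx : x ∈ E <;> simp [hx]
  have hE_int (θ : Θ) : Integrable (E.indicator fun _ => (1 : ℝ)) (P θ) :=
    (integrable_const 1).indicator hE
  have setIntegral_eq (A : Set X) (hA : MeasurableSet[mT.comap T] A) :
      ∫ x in A, (κ ∘ T) x ∂P θ = ∫ x in A, E.indicator (fun _ => (1 : ℝ)) x ∂P θ := by
    refine setIntegral_eq_of_dense hD (hκ.comp h.1) (measurable_const.indicator hE) hκT_le hE_le
      (hm A hA) (fun θ' hθ' => ?_) θ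
    rw [← setIntegral_condExp hm (hE_int θ') hA]
    exact integral_congr_ae (ae_restrict_of_ae (hκD ⟨θ', hθ'⟩).symm)
  have hκT_int : Integrable (κ ∘ T) (P θ) :=
    .of_bound (hκ.comp h.1).aestronglyMeasurable 1 (ae_of_all _ hκT_le)
  exact (ae_eq_condExp_of_forall_setIntegral_eq hm (hE_int θ) (fun _ _ _ => hκT_int.integrableOn)
    (fun A hA _ => setIntegral_eq A hA) hκT.stronglyMeasurable.aestronglyMeasurable).symm

end DenseSubmodel

theorem lemma_4_1_general {X Y T' Θ : Type*} [MeasurableSpace X] [MeasurableSpace Y]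
    [StandardBorelSpace Y] [MeasurableSpace T'] [MeasurableSpace.CountablySeparated T']
    {g : Y → X} (hg : Measurable g) (hg_surj : Function.Surjective g)
    {P : Θ → Measure X} [∀ θ, IsProbabilityMeasure (P θ)] {μ : Measure X}
    {T : X → T'} (hT : Measurable T) {f : Θ → X → ℝ} {Θ₀ : Set Θ}
    (hf : ∀ θ ∈ Θ₀, IsDensity (P θ) μ (f θ)) (hcount : Θ₀.Countable)
    (hdense : @Dense Θ (modelTopology P) Θ₀)
    (hD : ∀ x y : X, T x = T y → y ∈ DSet f x Θ₀) :
    IsSufficientStat P T := by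
  have : Countable Θ₀ := hcount.to_subtype
  let F (θ : Θ₀) (x : X) : ℝ≥0∞ := ENNReal.ofReal (f θ x)
  have hPF (θ : Θ₀) : P θ = μ.withDensity (F θ) := (hf θ θ.2).2.2
  have (θ : Θ₀) : IsFiniteMeasure (μ.withDensity (F θ)) := by
    rw [← hPF]
    infer_instance
  have hFT (x y : X) (hxy : T x = T y) :
      ∃ h : ℝ≥0∞, h ≠ 0 ∧ h ≠ ∞ ∧ ∀ θ, F θ y = h * F θ x := by
    obtain ⟨h, h_pos, hh⟩ := hD x y hxy
    refine ⟨.ofReal h, (ENNReal.ofReal_pos.2 h_pos).ne', ENNReal.ofReal_ne_top, fun θ => ?_⟩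
    simp only [F, hh θ θ.2, mul_comm _ h, ENNReal.ofReal_mul h_pos.le]
  refine IsSufficientStat.of_dense (D := Θ₀) ?_ hdense
  simp_rw [hPF]
  exact isSufficientStat_of_countable hg hg_surj (fun θ => (hf θ θ.2).1.ennreal_ofReal) hT hFT

/-- Lemma 4.1. -/
theorem lemma_4_1
    {X : Type u} [mX : MeasurableSpace X] {Θ : Type v} [Nonempty Θ]
    (P : Θ → Measure X) (hP : ∀ θ, IsProbabilityMeasure (P θ))
    (μ : Measure X) (hμ : SigmaFinite μ) (hac : ∀ θ, P θ ≪ μ)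
    (hX : IsAnalyticBorel X)
    {T' : Type w} [mT : MeasurableSpace T']
    (hTcg : MeasurableSpace.CountablyGenerated T')
    (hTsing : MeasurableSingletonClass T')
    (T : X → T') (hT : Measurable T)
    (f : Θ → X → ℝ) (hf : ∀ θ, IsDensity (P θ) μ (f θ))
    (Θ₀ : Set Θ) (hne : Θ₀.Nonempty) (hcount : Θ₀.Countable)
    (hdense : @Dense Θ (modelTopology P) Θ₀)
    (hD : ∀ x y : X, T x = T y → y ∈ DSet f x Θ₀) :
    IsSufficientStat P T := by
  obtain ⟨-, -, Y, _, _, g, hg, hg_surj⟩ := hX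
  exact lemma_4_1_general hg hg_surj hT (fun θ _ => hf θ) hcount hdense hD
end
end

section
/- Nonexistence claim from Counterexample 3.1. Let n ≥ 2 and let λⁿ denote the Lebesgue measure on ℝⁿ. There is no Borel measurable function u : ℝ → ℝⁿ such that (x₁,…,xₙ) = u(x₁ + ⋯ + xₙ) for λⁿ-almost every (x₁,…,xₙ) ∈ ℝⁿ. (Equivalently, the set A := {x ∈ ℝⁿ : u(Σ_{i=1}^n x_i) = x} satisfies λⁿ(A) = 0 for every Borel measurable u : ℝ → ℝⁿ; the proof uses that if λⁿ(A) > 0 then by the Steinhaus theorem A − A contains an open ball centered at 0, whereas A − A meets the hyperplane {x : Σ x_i = 0} only at 0.) -/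
open MeasureTheory

noncomputable section

universe u v w u'

-- The points `x` and `T x` have the same image under `f`, and `g` recovers both of them from it.
theorem ae_isFixedPt_of_ae_leftInverse {X Y : Type*} [MeasurableSpace X] {μ : Measure X}
    {T : X → X} {f : X → Y} {g : Y → X} (hT : Measure.QuasiMeasurePreserving T μ μ)
    (hfT : f ∘ T =ᵐ[μ] f) (hgf : ∀ᵐ x ∂μ, g (f x) = x) :
    ∀ᵐ x ∂μ, Function.IsFixedPt T x := by
  filter_upwards [hfT, hgf, hT.ae hgf] with x hfx hx hTx
  calc
    T x = g (f (T x)) := hTx.symm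
    _ = g (f x) := congrArg g hfx
    _ = x := hx

theorem not_ae_leftInverse_of_periodic {G Y : Type*} [AddGroup G] [MeasurableSpace G]
    [MeasurableAdd G] {μ : Measure G} [NeZero μ] [μ.IsAddRightInvariant] {f : G → Y} {c : G}
    (hf : Function.Periodic f c) (hc : c ≠ 0) (g : Y → G) :
    ¬ ∀ᵐ x ∂μ, g (f x) = x := by
  intro hgf
  have hfix : ∀ᵐ x ∂μ, x + c = x :=
    ae_isFixedPt_of_ae_leftInverse (measurePreserving_add_right μ c).quasiMeasurePreserving
      (.of_forall hf) hgf
  obtain ⟨x, hx⟩ := hfix.exists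
  exact hc (add_eq_left.mp hx)

theorem exists_ne_zero_sum_eq_zero (ι G : Type*) [Fintype ι] [Nontrivial ι] [AddCommGroup G]
    [Nontrivial G] : ∃ c : ι → G, c ≠ 0 ∧ ∑ i, c i = 0 := by
  classical
  obtain ⟨i, j, hij⟩ := exists_pair_ne ι
  obtain ⟨a, ha⟩ := exists_ne (0 : G)
  refine ⟨Pi.single i a - Pi.single j a, fun h => ha ?_, by simp⟩
  simpa [hij] using congrFun h i

theorem counterexample_3_1_no_factorization_general {ι G : Type*} [Fintype ι] [Nontrivial ι]
    [AddCommGroup G] [Nontrivial G] [MeasurableSpace G] [MeasurableAdd G]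
    (μ : Measure (ι → G)) [NeZero μ] [μ.IsAddRightInvariant] (u : G → ι → G) :
    ¬ ∀ᵐ x ∂μ, u (∑ i, x i) = x := by
  obtain ⟨c, hc, hsum⟩ := exists_ne_zero_sum_eq_zero ι G
  have hperiodic : Function.Periodic (fun x : ι → G => ∑ i, x i) c := fun x => by
    simp only [Pi.add_apply, Finset.sum_add_distrib, hsum, add_zero]
  exact not_ae_leftInverse_of_periodic hperiodic hc u

/-- Nonexistence claim from Counterexample 3.1: for `n ≥ 2` there is no Borel measurable
`u : ℝ → ℝⁿ` with `u (x₁ + ⋯ + xₙ) = x` for Lebesgue-a.e. `x ∈ ℝⁿ`. -/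
theorem counterexample_3_1_no_factorization
    (n : ℕ) (hn : 2 ≤ n) (u : ℝ → (Fin n → ℝ)) (hu : Measurable u) :
    ¬ (∀ᵐ x : Fin n → ℝ ∂volume, u (∑ i, x i) = x) := by
  have : Nontrivial (Fin n) := Fin.nontrivial_iff_two_le.mpr hn
  exact counterexample_3_1_no_factorization_general volume u
end
end
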